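/- Let D′ ⋐ D ⊂ ℝ^{2n+1} be bounded open sets, let k ≥ 0, and set s = 2k + n + 2. Then there exists a constant C > 0 such that for every smooth function f : cl(D) → ℝ^m and every ordinary multi-index α ∈ ℕ^{2n+1} with |α| ≤ k, one has sup_{x ∈ cl(D′)} |∂^α f(x)| ≤ C ‖f‖_{D,s}. In particular, the C^k(cl(D′))-norm of f is bounded by a constant times ‖f‖_{D,s}. -/

import Mathlib

open MeasureTheory Bornology

noncomputable section

variable {E : Type*} [NormedAddCommGroup E] [NormedSpace ℝ E]

/-- The standard contact form `η₀ = dx^{2n+1} - Σ x^{n+j} dx^j` on `ℝ^{2n+1}`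
(0-indexed coordinates): `η₀(x)(v) = v_{2n} - Σ_{j<n} x_{n+j} v_j`. -/
def eta0 (n : ℕ) (x v : Fin (2*n+1) → ℝ) : ℝ :=
  v ⟨2*n, by omega⟩ -
    ∑ j : Fin n, x ⟨n + j, by have := j.2; omega⟩ * v ⟨j, by have := j.2; omega⟩

/-- `dη₀ = Σ_{j<n} dx^j ∧ dx^{n+j}`. -/
def dEta0 (n : ℕ) (u v : Fin (2*n+1) → ℝ) : ℝ :=
  ∑ j : Fin n,
    (u ⟨j, by have := j.2; omega⟩ * v ⟨n + j, by have := j.2; omega⟩ -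
     u ⟨n + j, by have := j.2; omega⟩ * v ⟨j, by have := j.2; omega⟩)

/-- The horizontal vector fields: for `j < n`, `X_j = ∂_j + x_{n+j} ∂_{2n}`;
for `n ≤ j < 2n`, `X_j = ∂_j` (0-indexed). -/
def Xvec (n : ℕ) (j : Fin (2*n)) (x : Fin (2*n+1) → ℝ) : Fin (2*n+1) → ℝ :=
  if h : (j : ℕ) < n then
    (Pi.single (⟨j, by omega⟩ : Fin (2*n+1)) 1 : Fin (2*n+1) → ℝ)
      + x ⟨n + j, by omega⟩ • (Pi.single (⟨2*n, by omega⟩ : Fin (2*n+1)) 1 : Fin (2*n+1) → ℝ)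
  else
    (Pi.single (⟨j, by have := j.2; omega⟩ : Fin (2*n+1)) 1 : Fin (2*n+1) → ℝ)

/-- The horizontal derivative `X_j f`. -/
def hDeriv (n : ℕ) (j : Fin (2*n)) (f : (Fin (2*n+1) → ℝ) → E)
    (x : Fin (2*n+1) → ℝ) : E :=
  fderiv ℝ f x (Xvec n j x)

/-- Iterated horizontal derivative `X_I f = X_{i₁} ⋯ X_{i_t} f`. -/
def XI (n : ℕ) : List (Fin (2*n)) → ((Fin (2*n+1) → ℝ) → E) → ((Fin (2*n+1) → ℝ) → E)
  | [], f => f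
  | j :: I, f => hDeriv n j (XI n I f)

/-- Squared Folland–Stein norm `‖f‖_{D,s}² = Σ_{|I| ≤ s} ∫_D ‖X_I f‖²`. -/
def fsNormSq (n : ℕ) (D : Set (Fin (2*n+1) → ℝ)) (s : ℕ)
    (f : (Fin (2*n+1) → ℝ) → E) : ℝ :=
  ∑ t ∈ Finset.range (s+1), ∑ I : Fin t → Fin (2*n),
    ∫ x in D, ‖XI n (List.ofFn I) f x‖^2

/-- The Folland–Stein norm `‖f‖_{D,s}`. -/
def fsNorm (n : ℕ) (D : Set (Fin (2*n+1) → ℝ)) (s : ℕ)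
    (f : (Fin (2*n+1) → ℝ) → E) : ℝ :=
  Real.sqrt (fsNormSq n D s f)

/-- Ordinary partial derivative `∂_i f`. -/
def pDeriv (n : ℕ) (i : Fin (2*n+1)) (f : (Fin (2*n+1) → ℝ) → E)
    (x : Fin (2*n+1) → ℝ) : E :=
  fderiv ℝ f x (Pi.single i 1 : Fin (2*n+1) → ℝ)

/-- Iterated ordinary partial derivative. -/
def pI (n : ℕ) : List (Fin (2*n+1)) → ((Fin (2*n+1) → ℝ) → E) → ((Fin (2*n+1) → ℝ) → E)
  | [], f => f
  | i :: I, f => pDeriv n i (pI n I f)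

/-- The Reeb derivative `T₀ f = ∂_{2n} f` (0-indexed). -/
def T0Deriv (n : ℕ) (f : (Fin (2*n+1) → ℝ) → E) (x : Fin (2*n+1) → ℝ) : E :=
  fderiv ℝ f x (Pi.single (⟨2*n, by omega⟩ : Fin (2*n+1)) 1 : Fin (2*n+1) → ℝ)

/-- `X` is a contact vector field on `D`:  `dη₀(X, X_j) + X_j(η₀(X)) = 0` for all
horizontal `X_j`. -/
def IsContactVF (n : ℕ) (D : Set (Fin (2*n+1) → ℝ))
    (X : (Fin (2*n+1) → ℝ) → (Fin (2*n+1) → ℝ)) : Prop :=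
  ∀ j : Fin (2*n), ∀ x ∈ D,
    dEta0 n (X x) (Xvec n j x) + hDeriv n j (fun y => eta0 n y (X y)) x = 0

/-- The contact vector field with generating function `g`:
`X_g = g T₀ + Σ_j (-(X_{n+j} g) X_j + (X_j g) X_{n+j})`. -/
def genVF (n : ℕ) (g : (Fin (2*n+1) → ℝ) → ℝ) (x : Fin (2*n+1) → ℝ) :
    Fin (2*n+1) → ℝ :=
  g x • (Pi.single (⟨2*n, by omega⟩ : Fin (2*n+1)) 1 : Fin (2*n+1) → ℝ)
  + ∑ j : Fin n,
      (-(hDeriv n (⟨n + j, by have := j.2; omega⟩ : Fin (2*n)) g x) •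
          Xvec n (⟨j, by have := j.2; omega⟩ : Fin (2*n)) x
        + (hDeriv n (⟨j, by have := j.2; omega⟩ : Fin (2*n)) g x) •
          Xvec n (⟨n + j, by have := j.2; omega⟩ : Fin (2*n)) x)


set_option linter.unusedSimpArgs false
/-! ### Algebra of the group dilations and translations -/

abbrev lastI (n : ℕ) : Fin (2*n+1) := ⟨2*n, by omega⟩

abbrev eT (n : ℕ) : Fin (2*n+1) → ℝ := Pi.single (lastI n) 1

/-- the bilinear form `Σ_j a_{n+j} u_j`. -/
def yx (n : ℕ) (a u : Fin (2*n+1) → ℝ) : ℝ :=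
  ∑ j : Fin n, a ⟨n + j, by have := j.2; omega⟩ * u ⟨j, by have := j.2; omega⟩

def PhiL (n : ℕ) (a : Fin (2*n+1) → ℝ) (r : ℝ) :
    (Fin (2*n+1) → ℝ) →L[ℝ] (Fin (2*n+1) → ℝ) :=
  ContinuousLinearMap.pi fun i => if i = lastI n then
    r^2 • ContinuousLinearMap.proj (R := ℝ) (φ := fun _ : Fin (2*n+1) => ℝ) (lastI n)
      + r • ∑ j : Fin n, a ⟨n + j, by have := j.2; omega⟩ •
        ContinuousLinearMap.proj (R := ℝ) (φ := fun _ : Fin (2*n+1) => ℝ) ⟨j, by have := j.2; omega⟩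
    else r • ContinuousLinearMap.proj (R := ℝ) (φ := fun _ : Fin (2*n+1) => ℝ) i

lemma PhiL_apply (n : ℕ) (a : Fin (2*n+1) → ℝ) (r : ℝ) (u : Fin (2*n+1) → ℝ) (i) :
    PhiL n a r u i = if i = lastI n then r^2 * u (lastI n) + r * yx n a u else r * u i := by
  unfold PhiL yx
  split_ifs with h <;> simp [h]

def Phi (n : ℕ) (a : Fin (2*n+1) → ℝ) (r : ℝ) (u : Fin (2*n+1) → ℝ) : Fin (2*n+1) → ℝ :=
  a + PhiL n a r u

lemma hasFDerivAt_Phi (n : ℕ) (a : Fin (2*n+1) → ℝ) (r : ℝ) (u : Fin (2*n+1) → ℝ) :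
    HasFDerivAt (Phi n a r) (PhiL n a r) u :=
  (PhiL n a r).hasFDerivAt.const_add a

lemma Phi_zero (n : ℕ) (a : Fin (2*n+1) → ℝ) (u : Fin (2*n+1) → ℝ) : Phi n a 0 u = a := by
  unfold Phi
  have : PhiL n a 0 u = 0 := by
    ext i; rw [PhiL_apply]; simp
  rw [this, add_zero]

def dPhi (n : ℕ) (a : Fin (2*n+1) → ℝ) (r : ℝ) (u : Fin (2*n+1) → ℝ) : Fin (2*n+1) → ℝ :=
  fun i => if i = lastI n then 2 * r * u (lastI n) + yx n a u else u i

lemma hasDerivAt_Phi (n : ℕ) (a : Fin (2*n+1) → ℝ) (r : ℝ) (u : Fin (2*n+1) → ℝ) :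
    HasDerivAt (fun r => Phi n a r u) (dPhi n a r u) r := by
  rw [hasDerivAt_pi]
  intro i
  simp only [Phi, Pi.add_apply, PhiL_apply, dPhi]
  split_ifs with h
  · have h1 : HasDerivAt (fun r : ℝ => r^2 * u (lastI n) + r * yx n a u)
        (2 * r * u (lastI n) + yx n a u) r := by
      have := ((hasDerivAt_pow 2 r).mul_const (u (lastI n))).add
        ((hasDerivAt_id r).mul_const (yx n a u))
      refine this.congr_deriv ?_
      simp
    exact h1.const_add _
  · have := (hasDerivAt_id r).mul_const (u i)
    simpa using this.const_add (a i)

lemma sum_dite_fin (n : ℕ) (F : (i : ℕ) → i < n → ℝ) :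
    ∑ i : Fin (2*n), (if h : (i:ℕ) < n then F i h else 0) = ∑ j : Fin n, F j j.2 := by
  symm
  apply Finset.sum_of_injOn (fun j : Fin n => (⟨j, by omega⟩ : Fin (2*n)))
  · intro a _ b _ h; simpa [Fin.ext_iff] using h
  · intro a _; simp
  · intro i _ hi
    rw [dif_neg]
    intro h
    exact hi ⟨⟨i, h⟩, by simp, by simp⟩
  · intro j _; simp

lemma Xvec_apply (n : ℕ) (j : Fin (2*n)) (x : Fin (2*n+1) → ℝ) (i : Fin (2*n+1)) :
    Xvec n j x i = if i = lastI n then (if h : (j:ℕ) < n then x ⟨n + j, by omega⟩ else 0)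
      else if (i : ℕ) = j then 1 else 0 := by
  have hj := j.2
  unfold Xvec
  by_cases hi : i = lastI n
  · subst hi
    have h2 : ¬ (2 * n = (j:ℕ)) := by omega
    by_cases h : (j:ℕ) < n
    · simp [h, Pi.single_apply, Fin.ext_iff, h2]
    · simp [h, Pi.single_apply, Fin.ext_iff, h2]
  · have hi' : ¬ ((i:ℕ) = 2 * n) := by simpa [Fin.ext_iff] using hi
    by_cases h : (j:ℕ) < n
    · simp [h, Pi.single_apply, Fin.ext_iff, hi']
    · simp [h, Pi.single_apply, Fin.ext_iff, hi']

lemma dPhi_eq (n : ℕ) (a : Fin (2*n+1) → ℝ) (r : ℝ) (u : Fin (2*n+1) → ℝ) :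
    dPhi n a r u = ∑ i : Fin (2*n), u i.castSucc • Xvec n i (Phi n a r u)
      + (r * (2 * u (lastI n) - yx n u u)) • eT n := by
  ext k
  simp only [Pi.add_apply, Finset.sum_apply, Pi.smul_apply, smul_eq_mul, Xvec_apply, dPhi]
  by_cases hk : k = lastI n
  · subst hk
    simp only [if_true]
    have h1 : ∀ i : Fin (2*n), u i.castSucc * (if h : (i:ℕ) < n then
        Phi n a r u ⟨n + i, by omega⟩ else 0) = (if h : (i:ℕ) < n then
        u ⟨i, by omega⟩ * Phi n a r u ⟨n + i, by omega⟩ else 0) := by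
      intro i; split_ifs <;> simp; left; rfl
    rw [Finset.sum_congr rfl (fun i _ => h1 i),
      sum_dite_fin n (fun i h => u ⟨i, by omega⟩ * Phi n a r u ⟨n + i, by omega⟩)]
    have h2 : ∀ j : Fin n, u ⟨j, by omega⟩ * Phi n a r u ⟨n + j, by omega⟩ =
        a ⟨n + j, by omega⟩ * u ⟨j, by omega⟩ + r * (u ⟨n + j, by omega⟩ * u ⟨j, by omega⟩) := by
      intro j
      have : ¬ (n + (j:ℕ) = 2 * n) := by omega
      simp only [Phi, Pi.add_apply, PhiL_apply, Fin.ext_iff, this, if_false]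
      ring
    rw [Finset.sum_congr rfl (fun i _ => h2 i), Finset.sum_add_distrib, ← Finset.mul_sum]
    simp only [yx, Pi.single_eq_same]
    ring
  · have hk' : (k:ℕ) < 2 * n := by
      have := k.2
      have h3 : (k:ℕ) ≠ 2 * n := by simpa [Fin.ext_iff] using hk
      omega
    simp only [hk, if_false]
    rw [Finset.sum_eq_single ⟨k, hk'⟩]
    · simp [Pi.single_apply, hk]
    · intro b _ hb
      have : ¬ ((k:ℕ) = b) := by
        intro h; apply hb; ext; simp [h]
      simp [this]
    · simp

lemma PhiL_Xvec (n : ℕ) (a : Fin (2*n+1) → ℝ) (r : ℝ) (u : Fin (2*n+1) → ℝ) (j : Fin (2*n)) :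
    PhiL n a r (Xvec n j u) = r • Xvec n j (Phi n a r u) := by
  have hj := j.2
  ext k
  rw [PhiL_apply, Pi.smul_apply, smul_eq_mul]
  by_cases hk : k = lastI n
  · subst hk
    simp only [if_true]
    have h1 : yx n a (Xvec n j u) = if h : (j:ℕ) < n then a ⟨n + j, by omega⟩ else 0 := by
      unfold yx
      simp only [Xvec_apply]
      by_cases h : (j:ℕ) < n
      · rw [Finset.sum_eq_single ⟨j, h⟩]
        · have : ¬ ((j:ℕ) = 2 * n) := by omega
          simp [this, h]
        · intro b _ hb
          have h1 : ¬ ((b:ℕ) = 2 * n) := by omega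
          have h2 : ¬ ((b:ℕ) = j) := by intro h'; apply hb; ext; simp [h']
          simp [h1, h2]
        · simp
      · refine Eq.trans ?_ (dif_neg h).symm
        apply Finset.sum_eq_zero
        intro b _
        have h1 : ¬ ((b:ℕ) = 2 * n) := by omega
        have h2 : ¬ ((b:ℕ) = j) := by omega
        simp [h1, h2]
    rw [h1, Xvec_apply, Xvec_apply]
    by_cases h : (j:ℕ) < n
    · have : ¬ (n + (j:ℕ) = 2 * n) := by omega
      simp only [if_true, h, dif_pos, Phi, Pi.add_apply, PhiL_apply, Fin.ext_iff, this, if_false]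
      ring
    · simp [h]
  · simp only [hk, if_false, Xvec_apply]

lemma det_PhiL (n : ℕ) (a : Fin (2*n+1) → ℝ) (r : ℝ) : (PhiL n a r).det = r^(2*n+2) := by
  have h0 : (PhiL n a r).det = LinearMap.det (PhiL n a r : (Fin (2*n+1) → ℝ) →ₗ[ℝ] (Fin (2*n+1) → ℝ)) := rfl
  rw [h0, ← LinearMap.det_toMatrix', Matrix.det_of_isLowerTriangular]
  · rw [Fin.prod_univ_castSucc]
    have h1 : ∀ i : Fin (2*n), (LinearMap.toMatrix' (PhiL n a r : (Fin (2*n+1) → ℝ) →ₗ[ℝ] (Fin (2*n+1) → ℝ))) i.castSucc i.castSucc = r := by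
      intro i
      have : ¬ ((i:ℕ) = 2 * n) := by have := i.2; omega
      rw [LinearMap.toMatrix'_apply]
      simp [PhiL_apply, this, Fin.ext_iff]
    have h2 : (LinearMap.toMatrix' (PhiL n a r : (Fin (2*n+1) → ℝ) →ₗ[ℝ] (Fin (2*n+1) → ℝ))) (Fin.last (2*n)) (Fin.last (2*n)) = r^2 := by
      rw [LinearMap.toMatrix'_apply]
      have h3 : Fin.last (2*n) = lastI n := rfl
      have h4 : yx n a (Pi.single (lastI n) 1) = 0 := by
        unfold yx
        apply Finset.sum_eq_zero
        intro b _
        have h1 : ¬ ((b:ℕ) = 2 * n) := by omega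
        simp [Pi.single_apply, Fin.ext_iff, h1]
      rw [h3]
      have h5 : (PhiL n a r) (Pi.single (lastI n) 1) (lastI n) = r^2 := by
        rw [PhiL_apply]; simp [h4]
      exact h5
    rw [Finset.prod_congr rfl (fun i _ => h1 i), h2]
    simp
    ring
  · intro i k hik
    have hik' : i < k := by simpa using hik
    have h1 : i ≠ lastI n := by
      intro h; subst h
      have := k.2
      have h2 : 2 * n < (k:ℕ) := hik'
      omega
    rw [LinearMap.toMatrix'_apply]
    have h5 : (PhiL n a r) (Pi.single k 1) i = 0 := by
      rw [PhiL_apply]; simp [h1, Pi.single_apply, hik'.ne]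
    exact h5


/-! ### Calculus -/

section HCalc

variable {E : Type*} [NormedAddCommGroup E] [NormedSpace ℝ E]

def cX (n : ℕ) (j : Fin (2*n)) (x : Fin (2*n+1) → ℝ) : ℝ :=
  if h : (j:ℕ) < n then x ⟨n + j, by omega⟩ else 0

lemma Xvec_eq (n : ℕ) (j : Fin (2*n)) (x : Fin (2*n+1) → ℝ) :
    Xvec n j x = Pi.single (j.castSucc) 1 + cX n j x • eT n := by
  unfold Xvec cX
  split_ifs
  · rfl
  · simp; rfl

def cXL (n : ℕ) (j : Fin (2*n)) : (Fin (2*n+1) → ℝ) →L[ℝ] ℝ :=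
  if h : (j:ℕ) < n then ContinuousLinearMap.proj (R := ℝ) (φ := fun _ : Fin (2*n+1) => ℝ) ⟨n + j, by omega⟩ else 0

lemma cX_eq (n : ℕ) (j : Fin (2*n)) : cX n j = cXL n j := by
  ext x
  unfold cX cXL
  split_ifs <;> simp

lemma contDiff_cX (n : ℕ) (j : Fin (2*n)) : ContDiff ℝ (⊤:ℕ∞) (cX n j) := by
  rw [cX_eq]; exact (cXL n j).contDiff

lemma cXL_eT (n : ℕ) (j : Fin (2*n)) : cXL n j (eT n) = 0 := by
  unfold cXL
  split_ifs with h
  · have : ¬ (n + (j:ℕ) = 2 * n) := by omega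
    simp [Pi.single_apply, Fin.ext_iff, this]
  · simp

lemma hasFDerivAt_Xvec (n : ℕ) (j : Fin (2*n)) (x : Fin (2*n+1) → ℝ) :
    HasFDerivAt (Xvec n j) ((cXL n j).smulRight (eT n)) x := by
  have h1 : Xvec n j = fun x => Pi.single (j.castSucc) 1 + cXL n j x • eT n := by
    ext1 x; rw [Xvec_eq, cX_eq]
  rw [h1]
  exact ((cXL n j).hasFDerivAt.smul_const (eT n)).const_add _

lemma contDiff_Xvec (n : ℕ) (j : Fin (2*n)) : ContDiff ℝ (⊤:ℕ∞) (Xvec n j) := by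
  have h1 : Xvec n j = fun x => Pi.single (j.castSucc) 1 + cXL n j x • eT n := by
    ext1 x; rw [Xvec_eq, cX_eq]
  rw [h1]
  exact contDiff_const.add ((cXL n j).contDiff.smul contDiff_const)

lemma contDiff_fderiv_apply {n : ℕ} {f : (Fin (2*n+1) → ℝ) → E} (hf : ContDiff ℝ (⊤:ℕ∞) f)
    {w : (Fin (2*n+1) → ℝ) → (Fin (2*n+1) → ℝ)} (hw : ContDiff ℝ (⊤:ℕ∞) w) :
    ContDiff ℝ (⊤:ℕ∞) (fun x => fderiv ℝ f x (w x)) :=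
  (hf.fderiv_right (by simp)).clm_apply hw

lemma contDiff_hDeriv {n : ℕ} (j : Fin (2*n)) {f : (Fin (2*n+1) → ℝ) → E}
    (hf : ContDiff ℝ (⊤:ℕ∞) f) : ContDiff ℝ (⊤:ℕ∞) (hDeriv n j f) :=
  contDiff_fderiv_apply hf (contDiff_Xvec n j)

lemma contDiff_pDeriv {n : ℕ} (j : Fin (2*n+1)) {f : (Fin (2*n+1) → ℝ) → E}
    (hf : ContDiff ℝ (⊤:ℕ∞) f) : ContDiff ℝ (⊤:ℕ∞) (pDeriv n j f) :=
  contDiff_fderiv_apply hf contDiff_const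

lemma contDiff_XI {n : ℕ} (I : List (Fin (2*n))) {f : (Fin (2*n+1) → ℝ) → E}
    (hf : ContDiff ℝ (⊤:ℕ∞) f) : ContDiff ℝ (⊤:ℕ∞) (XI n I f) := by
  induction I with
  | nil => exact hf
  | cons j I ih => exact contDiff_hDeriv j ih

lemma XI_append {n : ℕ} (I J : List (Fin (2*n))) (f : (Fin (2*n+1) → ℝ) → E) :
    XI n (I ++ J) f = XI n I (XI n J f) := by
  induction I with
  | nil => rfl
  | cons j I ih => simp only [List.cons_append, XI, ih]

lemma hDeriv_eq {n : ℕ} (j : Fin (2*n)) (f : (Fin (2*n+1) → ℝ) → E) (x : Fin (2*n+1) → ℝ) :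
    hDeriv n j f x = pDeriv n j.castSucc f x + cX n j x • pDeriv n (lastI n) f x := by
  unfold hDeriv pDeriv
  rw [Xvec_eq, map_add, map_smul]

lemma hDeriv_hDeriv {n : ℕ} (i j : Fin (2*n)) {f : (Fin (2*n+1) → ℝ) → E}
    (hf : ContDiff ℝ (⊤:ℕ∞) f) (x : Fin (2*n+1) → ℝ) :
    hDeriv n i (hDeriv n j f) x = fderiv ℝ (fderiv ℝ f) x (Xvec n i x) (Xvec n j x)
      + cXL n j (Xvec n i x) • pDeriv n (lastI n) f x := by
  have h1 : ContDiff ℝ (⊤:ℕ∞) (fderiv ℝ f) := hf.fderiv_right (by simp)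
  have h2 : HasFDerivAt (fderiv ℝ f) (fderiv ℝ (fderiv ℝ f) x) x :=
    (h1.differentiable (by simp) x).hasFDerivAt
  have h3 := h2.clm_apply (hasFDerivAt_Xvec n j x)
  have h4 : hDeriv n i (hDeriv n j f) x
    = fderiv ℝ (fun y => (fderiv ℝ f y) (Xvec n j y)) x (Xvec n i x) := rfl
  rw [h4, h3.fderiv]
  simp [pDeriv, add_comm]

lemma hcommutator {n : ℕ} (hn : 1 ≤ n) {f : (Fin (2*n+1) → ℝ) → E}
    (hf : ContDiff ℝ (⊤:ℕ∞) f) (x : Fin (2*n+1) → ℝ) :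
    pDeriv n (lastI n) f x = hDeriv n ⟨n, by omega⟩ (hDeriv n ⟨0, by omega⟩ f) x
      - hDeriv n ⟨0, by omega⟩ (hDeriv n ⟨n, by omega⟩ f) x := by
  rw [hDeriv_hDeriv _ _ hf, hDeriv_hDeriv _ _ hf]
  have hs : IsSymmSndFDerivAt ℝ f x := hf.contDiffAt.isSymmSndFDerivAt (by simp; exact WithTop.coe_le_coe.2 le_top)
  rw [hs.eq]
  have h1 : cXL n ⟨0, by omega⟩ (Xvec n ⟨n, by omega⟩ x) = 1 := by
    unfold cXL
    rw [dif_pos (by simp; omega)]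
    have h2 : ¬ (n = 2 * n) := by omega
    simp [Xvec_apply, Fin.ext_iff, h2]
  have h2 : cXL n ⟨n, by omega⟩ (Xvec n ⟨0, by omega⟩ x) = 0 := by
    unfold cXL
    rw [dif_neg (by simp)]; simp
  rw [h1, h2]; simp

lemma hDeriv_comp_Phi {n : ℕ} (j : Fin (2*n)) {g : (Fin (2*n+1) → ℝ) → E}
    (hg : ContDiff ℝ (⊤:ℕ∞) g) (a : Fin (2*n+1) → ℝ) (r : ℝ) (u : Fin (2*n+1) → ℝ) :
    hDeriv n j (fun u => g (Phi n a r u)) u = r • hDeriv n j g (Phi n a r u) := by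
  have h1 : HasFDerivAt g (fderiv ℝ g (Phi n a r u)) (Phi n a r u) :=
    (hg.differentiable (by simp) _).hasFDerivAt
  have h2 := h1.comp u (hasFDerivAt_Phi n a r u)
  unfold hDeriv
  have h3 : fderiv ℝ (fun u => g (Phi n a r u)) u = _ := h2.fderiv
  rw [h3, ContinuousLinearMap.comp_apply, PhiL_Xvec, map_smul]

lemma contDiff_comp_Phi {n : ℕ} {g : (Fin (2*n+1) → ℝ) → E}
    (hg : ContDiff ℝ (⊤:ℕ∞) g) (a : Fin (2*n+1) → ℝ) (r : ℝ) :
    ContDiff ℝ (⊤:ℕ∞) (fun u => g (Phi n a r u)) :=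
  hg.comp (contDiff_const.add (PhiL n a r).contDiff)

/-! Test functions -/

def Tst (n : ℕ) (ρ : ℝ) (φ : (Fin (2*n+1) → ℝ) → ℝ) : Prop :=
  ContDiff ℝ (⊤:ℕ∞) φ ∧ tsupport φ ⊆ Metric.ball 0 ρ

lemma Tst.hcs {n : ℕ} {ρ : ℝ} {φ : (Fin (2*n+1) → ℝ) → ℝ} (h : Tst n ρ φ) :
    HasCompactSupport φ :=
  HasCompactSupport.of_support_subset_isCompact (isCompact_closedBall 0 ρ)
    ((subset_tsupport φ).trans (h.2.trans Metric.ball_subset_closedBall))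

lemma Tst.mul {n : ℕ} {ρ : ℝ} {φ : (Fin (2*n+1) → ℝ) → ℝ} (h : Tst n ρ φ)
    {p : (Fin (2*n+1) → ℝ) → ℝ} (hp : ContDiff ℝ (⊤:ℕ∞) p) : Tst n ρ (fun x => p x * φ x) :=
  ⟨hp.mul h.1, (tsupport_mul_subset_right).trans h.2⟩

lemma Tst.hDeriv {n : ℕ} {ρ : ℝ} {φ : (Fin (2*n+1) → ℝ) → ℝ} (h : Tst n ρ φ) (j : Fin (2*n)) :
    Tst n ρ (hDeriv n j φ) := by
  refine ⟨contDiff_hDeriv j h.1, ?_⟩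
  refine Set.Subset.trans ?_ h.2
  refine Set.Subset.trans ?_ (tsupport_fderiv_subset ℝ (f := φ))
  apply closure_mono
  intro x hx hx'
  apply hx
  simp only [_root_.hDeriv, hx']
  simp

lemma integrable_tst {n : ℕ} {φ : (Fin (2*n+1) → ℝ) → ℝ} (h : Continuous φ)
    (hc : HasCompactSupport φ) {g : (Fin (2*n+1) → ℝ) → E} (hg : Continuous g) :
    Integrable (fun x => φ x • g x) :=
  (h.smul hg).integrable_of_hasCompactSupport hc.smul_right

lemma ibp_const {n : ℕ} {φ : (Fin (2*n+1) → ℝ) → ℝ} (h : ContDiff ℝ (⊤:ℕ∞) φ)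
    (hc : HasCompactSupport φ) {g : (Fin (2*n+1) → ℝ) → E} (hg : ContDiff ℝ (⊤:ℕ∞) g)
    (i : Fin (2*n+1)) :
    ∫ x, φ x • pDeriv n i g x = - ∫ x, pDeriv n i φ x • g x := by
  apply integral_smul_fderiv_eq_neg_fderiv_smul_of_integrable
  · exact integrable_tst (contDiff_pDeriv i h).continuous (hc.fderiv_apply ℝ _) hg.continuous
  · exact integrable_tst h.continuous hc (contDiff_pDeriv i hg).continuous
  · exact integrable_tst h.continuous hc hg.continuous
  · intro x _; exact h.differentiable (by simp) x
  · intro x _; exact hg.differentiable (by simp) x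

lemma ibp {n : ℕ} {ρ : ℝ} {φ : (Fin (2*n+1) → ℝ) → ℝ} (h : Tst n ρ φ)
    {g : (Fin (2*n+1) → ℝ) → E} (hg : ContDiff ℝ (⊤:ℕ∞) g) (j : Fin (2*n)) :
    ∫ x, φ x • hDeriv n j g x = - ∫ x, hDeriv n j φ x • g x := by
  have hm := h.mul (contDiff_cX n j)
  have e1 : ∀ x, φ x • hDeriv n j g x = φ x • pDeriv n j.castSucc g x +
      (cX n j x * φ x) • pDeriv n (lastI n) g x := by
    intro x; rw [hDeriv_eq, smul_add, smul_smul, mul_comm (φ x)]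
  have e2 : ∀ x, hDeriv n j φ x • g x = pDeriv n j.castSucc φ x • g x +
      pDeriv n (lastI n) (fun x => cX n j x * φ x) x • g x := by
    intro x; rw [hDeriv_eq, ← add_smul]
    congr 2
    unfold pDeriv
    have h1 : HasFDerivAt (cX n j) (cXL n j) x := by rw [cX_eq]; exact (cXL n j).hasFDerivAt
    have h2 : HasFDerivAt φ (fderiv ℝ φ x) x := (h.1.differentiable (by simp) x).hasFDerivAt
    have h3 := (h1.mul h2).fderiv
    have h4 : fderiv ℝ (fun x => cX n j x * φ x) x = _ := h3
    rw [h4]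
    have := cXL_eT n j
    simp only [eT] at this
    simp [this]
  simp_rw [e1, e2]
  rw [integral_add, integral_add, ibp_const h.1 h.hcs hg, ibp_const hm.1 hm.hcs hg]
  · ring_nf
    abel
  · exact integrable_tst (contDiff_pDeriv _ h.1).continuous (h.hcs.fderiv_apply ℝ _) hg.continuous
  · exact integrable_tst (contDiff_pDeriv _ hm.1).continuous (hm.hcs.fderiv_apply ℝ _) hg.continuous
  · exact integrable_tst h.1.continuous h.hcs (contDiff_pDeriv _ hg).continuous
  · exact integrable_tst hm.1.continuous hm.hcs (contDiff_pDeriv _ hg).continuous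

def Av (n : ℕ) (φ : (Fin (2*n+1) → ℝ) → ℝ) (g : (Fin (2*n+1) → ℝ) → E)
    (a : Fin (2*n+1) → ℝ) (r : ℝ) : E := ∫ u, φ u • g (Phi n a r u)

lemma continuous_yx (n : ℕ) (a : Fin (2*n+1) → ℝ) : Continuous (yx n a) := by
  unfold yx; fun_prop

lemma contDiff_yx (n : ℕ) : ContDiff ℝ (⊤:ℕ∞) (fun u => yx n u u) := by
  unfold yx; fun_prop

lemma continuous_Phi (n : ℕ) :
    Continuous (fun p : ((Fin (2*n+1) → ℝ) × ℝ) × (Fin (2*n+1) → ℝ) => Phi n p.1.1 p.1.2 p.2) := by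
  refine continuous_pi fun i => ?_
  simp only [Phi, Pi.add_apply, PhiL_apply]
  split_ifs
  · unfold yx; fun_prop
  · fun_prop

lemma continuous_dPhi (n : ℕ) (a : Fin (2*n+1) → ℝ) :
    Continuous (fun p : ℝ × (Fin (2*n+1) → ℝ) => dPhi n a p.1 p.2) := by
  refine continuous_pi fun i => ?_
  simp only [dPhi]
  split_ifs
  · unfold yx; fun_prop
  · fun_prop

lemma hasDerivAt_Av0 {n : ℕ} {ρ : ℝ} {φ : (Fin (2*n+1) → ℝ) → ℝ} (h : Tst n ρ φ)
    {g : (Fin (2*n+1) → ℝ) → E} (hg : ContDiff ℝ (⊤:ℕ∞) g) (a : Fin (2*n+1) → ℝ) (r : ℝ) :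
    HasDerivAt (Av n φ g a) (∫ u, φ u • fderiv ℝ g (Phi n a r u) (dPhi n a r u)) r := by
  have hP : Continuous (fun p : ℝ × (Fin (2*n+1) → ℝ) => Phi n a p.1 p.2) :=
    (continuous_Phi n).comp (by fun_prop : Continuous (fun p : ℝ × (Fin (2*n+1) → ℝ) => ((a, p.1), p.2)))
  have hF : Continuous (fun p : ℝ × (Fin (2*n+1) → ℝ) =>
      φ p.2 • fderiv ℝ g (Phi n a p.1 p.2) (dPhi n a p.1 p.2)) := by
    have h1 : Continuous (fderiv ℝ g) := hg.continuous_fderiv (by simp)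
    exact (h.1.continuous.comp continuous_snd).smul ((h1.comp hP).clm_apply (continuous_dPhi n a))
  obtain ⟨M, hM⟩ := ((isCompact_closedBall r 1).prod (h.hcs : IsCompact (tsupport φ))).exists_bound_of_continuousOn hF.continuousOn
  have key := hasDerivAt_integral_of_dominated_loc_of_deriv_le (μ := (volume : Measure (Fin (2*n+1) → ℝ)))
    (F := fun r u => φ u • g (Phi n a r u)) (x₀ := r)
    (F' := fun r u => φ u • fderiv ℝ g (Phi n a r u) (dPhi n a r u))
    (bound := (tsupport φ).indicator (fun _ => M)) (s := Metric.ball r 1) (Metric.ball_mem_nhds r one_pos)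
    ?_ ?_ ?_ ?_ ?_ ?_
  · exact key.2
  · refine Filter.Eventually.of_forall fun s => ?_
    exact (h.1.continuous.smul (contDiff_comp_Phi hg a s).continuous).aestronglyMeasurable
  · exact integrable_tst h.1.continuous h.hcs (contDiff_comp_Phi hg a r).continuous
  · exact (hF.comp (by fun_prop : Continuous (fun u : (Fin (2*n+1) → ℝ) => (r, u)))).aestronglyMeasurable
  · refine Filter.Eventually.of_forall fun u => ?_
    intro s hs
    by_cases hu : u ∈ tsupport φ
    · rw [Set.indicator_of_mem hu]
      exact hM (s, u) ⟨Metric.ball_subset_closedBall hs, hu⟩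
    · rw [Set.indicator_of_notMem hu, image_eq_zero_of_notMem_tsupport hu]
      simp
  · rw [integrable_indicator_iff (isClosed_tsupport φ).measurableSet]
    exact integrableOn_const (IsCompact.measure_lt_top h.hcs).ne
  · refine Filter.Eventually.of_forall fun u => ?_
    intro s _
    have h1 : HasFDerivAt g (fderiv ℝ g (Phi n a s u)) (Phi n a s u) :=
      (hg.differentiable (by simp) _).hasFDerivAt
    exact (h1.comp_hasDerivAt s (hasDerivAt_Phi n a s u)).const_smul (φ u)

lemma hasDerivAt_Av {n : ℕ} (hn : 1 ≤ n) {ρ : ℝ} {φ : (Fin (2*n+1) → ℝ) → ℝ} (h : Tst n ρ φ)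
    {g : (Fin (2*n+1) → ℝ) → E} (hg : ContDiff ℝ (⊤:ℕ∞) g) (a : Fin (2*n+1) → ℝ) (r : ℝ) :
    HasDerivAt (Av n φ g a)
      (∑ i : Fin (2*n), Av n (fun u => u i.castSucc * φ u) (hDeriv n i g) a r
        + (Av n (hDeriv n ⟨0, by omega⟩ (fun u => (2 * u (lastI n) - yx n u u) * φ u))
            (hDeriv n ⟨n, by omega⟩ g) a r
          - Av n (hDeriv n ⟨n, by omega⟩ (fun u => (2 * u (lastI n) - yx n u u) * φ u))
            (hDeriv n ⟨0, by omega⟩ g) a r)) r := by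
  refine (hasDerivAt_Av0 h hg a r).congr_deriv ?_
  have hq : ContDiff ℝ (⊤:ℕ∞) (fun u : Fin (2*n+1) → ℝ => 2 * u (lastI n) - yx n u u) := by
    refine ContDiff.sub (by fun_prop) (contDiff_yx n)
  have hqφ := h.mul hq
  set ψ : (Fin (2*n+1) → ℝ) → ℝ := fun u => (2 * u (lastI n) - yx n u u) * φ u with hψ
  set i0 : Fin (2*n) := ⟨0, by omega⟩ with hi0
  set i1 : Fin (2*n) := ⟨n, by omega⟩ with hi1
  have hcm : ∀ i : Fin (2*n), Tst n ρ (fun u => u i.castSucc * φ u) := fun i =>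
    h.mul (p := fun u => u i.castSucc) (by fun_prop)
  have e : ∀ u, φ u • fderiv ℝ g (Phi n a r u) (dPhi n a r u) =
      ∑ i : Fin (2*n), (u i.castSucc * φ u) • hDeriv n i g (Phi n a r u) +
      (ψ u • hDeriv n i1 (fun u => hDeriv n i0 g (Phi n a r u)) u
        - ψ u • hDeriv n i0 (fun u => hDeriv n i1 g (Phi n a r u)) u) := by
    intro u
    rw [dPhi_eq, map_add, map_sum, hDeriv_comp_Phi _ (contDiff_hDeriv _ hg),
      hDeriv_comp_Phi _ (contDiff_hDeriv _ hg), ← smul_sub, ← smul_sub, ← hcommutator hn hg]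
    rw [smul_add, Finset.smul_sum]
    congr 1
    · refine Finset.sum_congr rfl fun i _ => ?_
      rw [map_smul, smul_smul, mul_comm]; rfl
    · rw [map_smul, smul_smul, smul_smul]
      unfold pDeriv
      congr 1
      simp only [hψ]; ring
  simp_rw [e]
  have I1 : Integrable fun u => ψ u • hDeriv n i1 (fun u => hDeriv n i0 g (Phi n a r u)) u :=
    integrable_tst hqφ.1.continuous hqφ.hcs
      (contDiff_hDeriv i1 (contDiff_comp_Phi (contDiff_hDeriv i0 hg) a r)).continuous
  have I0 : Integrable fun u => ψ u • hDeriv n i0 (fun u => hDeriv n i1 g (Phi n a r u)) u :=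
    integrable_tst hqφ.1.continuous hqφ.hcs
      (contDiff_hDeriv i0 (contDiff_comp_Phi (contDiff_hDeriv i1 hg) a r)).continuous
  have IS : ∀ i ∈ (Finset.univ : Finset (Fin (2*n))), Integrable fun u : Fin (2*n+1) → ℝ =>
      (u i.castSucc * φ u) • hDeriv n i g (Phi n a r u) := fun i _ =>
    integrable_tst (hcm i).1.continuous (hcm i).hcs
      (contDiff_comp_Phi (contDiff_hDeriv i hg) a r).continuous
  have ID : Integrable fun u => ψ u • hDeriv n i1 (fun u => hDeriv n i0 g (Phi n a r u)) u
      - ψ u • hDeriv n i0 (fun u => hDeriv n i1 g (Phi n a r u)) u := I1.sub I0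
  rw [integral_add (integrable_finsetSum _ IS) ID, integral_finsetSum _ IS,
    integral_sub I1 I0, ibp hqφ (contDiff_comp_Phi (contDiff_hDeriv i0 hg) a r),
    ibp hqφ (contDiff_comp_Phi (contDiff_hDeriv i1 hg) a r)]
  simp only [Av]
  congr 1
  abel

end HCalc


/-! ### The basic estimate -/

section HEst

variable {E : Type*} [NormedAddCommGroup E] [NormedSpace ℝ E]

def Bd (n l : ℕ) (S : Set (Fin (2*n+1) → ℝ)) (g : (Fin (2*n+1) → ℝ) → E) (N : ℝ) : Prop :=
  ∀ I : List (Fin (2*n)), I.length ≤ l → ∫ x in S, ‖XI n I g x‖^2 ≤ N^2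

lemma Bd.hDeriv {n l : ℕ} {S : Set (Fin (2*n+1) → ℝ)} {g : (Fin (2*n+1) → ℝ) → E} {N : ℝ}
    (h : Bd n (l+1) S g N) (j : Fin (2*n)) : Bd n l S (hDeriv n j g) N := by
  intro I hI
  have h1 := h (I ++ [j]) (by simpa using hI)
  rwa [XI_append] at h1

lemma Bd.mono {n l : ℕ} {S : Set (Fin (2*n+1) → ℝ)} {g : (Fin (2*n+1) → ℝ) → E} {N : ℝ}
    (h : Bd n (l+1) S g N) : Bd n l S g N := fun I hI => h I (by omega)

lemma Phi_injective (n : ℕ) (a : Fin (2*n+1) → ℝ) {r : ℝ} (hr : r ≠ 0) :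
    Function.Injective (Phi n a r) := by
  have h1 : LinearMap.det (PhiL n a r : (Fin (2*n+1) → ℝ) →ₗ[ℝ] (Fin (2*n+1) → ℝ)) ≠ 0 := by
    have := det_PhiL n a r
    rw [show LinearMap.det (PhiL n a r : (Fin (2*n+1) → ℝ) →ₗ[ℝ] (Fin (2*n+1) → ℝ))
      = (PhiL n a r).det from rfl, this]
    positivity
  have h2 : Function.Injective (PhiL n a r) :=
    (LinearMap.equivOfDetNeZero _ h1).injective
  intro u v huv
  exact h2 (add_left_cancel huv)

lemma integrableOn_of_bounded {n : ℕ} {S : Set (Fin (2*n+1) → ℝ)} (hS : IsBounded S)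
    {h : (Fin (2*n+1) → ℝ) → E} (hh : Continuous h) : IntegrableOn h S :=
  (hh.continuousOn.integrableOn_compact hS.isCompact_closure).mono_set subset_closure

lemma change_var {n : ℕ} {ρ : ℝ} {S : Set (Fin (2*n+1) → ℝ)} (hSb : IsBounded S)
    (hSm : MeasurableSet S) {a : Fin (2*n+1) → ℝ} {r : ℝ} (hr : 0 < r)
    (hmap : Set.MapsTo (Phi n a r) (Metric.ball 0 ρ) S)
    {g : (Fin (2*n+1) → ℝ) → E} (hg : Continuous g) :
    r^(2*n+2) * ∫ u in Metric.ball 0 ρ, ‖g (Phi n a r u)‖^2 ≤ ∫ x in S, ‖g x‖^2 := by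
  have h1 := integral_image_eq_integral_abs_det_fderiv_smul (volume : Measure (Fin (2*n+1) → ℝ))
    (Metric.isOpen_ball (x := (0 : Fin (2*n+1) → ℝ)) (ε := ρ)).measurableSet
    (f := Phi n a r) (f' := fun _ => PhiL n a r)
    (fun x _ => (hasFDerivAt_Phi n a r x).hasFDerivWithinAt)
    (Phi_injective n a hr.ne').injOn (fun x => ‖g x‖^2)
  simp only [det_PhiL, smul_eq_mul] at h1
  rw [integral_const_mul, abs_of_pos (by positivity)] at h1
  rw [← h1]
  apply setIntegral_mono_set
  · exact integrableOn_of_bounded hSb (by fun_prop)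
  · exact Filter.Eventually.of_forall fun x => by positivity
  · exact (Set.image_subset_iff.2 hmap).eventuallyLE

variable (E) in
def Est (n : ℕ) (ρ : ℝ) (l : ℕ) (e : ℝ) : Prop :=
  ∀ φ, Tst n ρ φ → ∃ C : ℝ, 0 ≤ C ∧ ∀ S : Set (Fin (2*n+1) → ℝ), IsBounded S → MeasurableSet S →
    ∀ a : Fin (2*n+1) → ℝ, (∀ r ∈ Set.Ioc (0:ℝ) 1, Set.MapsTo (Phi n a r) (Metric.ball 0 ρ) S) →
    ∀ g : (Fin (2*n+1) → ℝ) → E, ContDiff ℝ (⊤:ℕ∞) g → ∀ N : ℝ, 0 < N → Bd n l S g N →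
    ∀ r ∈ Set.Ioc (0:ℝ) 1, ‖Av n φ g a r‖ ≤ C * r^e * N

lemma est_zero (n : ℕ) (ρ : ℝ) : Est E n ρ 0 (-((n:ℝ) + 3/2)) := by
  intro φ hφ
  set B : Set (Fin (2*n+1) → ℝ) := Metric.ball 0 ρ
  refine ⟨((∫ u in B, φ u ^ 2) + 1) / 2, by positivity, ?_⟩
  intro S hSb hSm a hmap g hg N hN hBd r hr
  have hr0 : 0 < r := hr.1
  have hcv := change_var hSb hSm hr0 (hmap r hr) hg.continuous
  have h0 := hBd [] (by simp)
  simp only [XI] at h0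
  set R : ℝ := (r^(n+1))⁻¹ * N with hR
  have hRpos : 0 < R := by positivity
  have hG : ∫ u in B, ‖g (Phi n a r u)‖^2 ≤ R^2 := by
    have h1 : r^(2*n+2) * ∫ u in B, ‖g (Phi n a r u)‖^2 ≤ N^2 := hcv.trans h0
    have h2 : R^2 = (r^(2*n+2))⁻¹ * N^2 := by
      rw [hR, mul_pow, inv_pow, ← pow_mul]; congr 3; ring
    rw [h2, inv_mul_eq_div, le_div_iff₀ (by positivity), mul_comm]
    exact h1
  have hgc : Continuous (fun u => g (Phi n a r u)) := (contDiff_comp_Phi hg a r).continuous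
  have hφc : Continuous φ := hφ.1.continuous
  have hBb : IsBounded B := Metric.isBounded_ball
  have h1 : ‖Av n φ g a r‖ ≤ ∫ u in B, ‖φ u • g (Phi n a r u)‖ := by
    have : Av n φ g a r = ∫ u in B, φ u • g (Phi n a r u) := by
      unfold Av
      rw [setIntegral_eq_integral_of_forall_compl_eq_zero]
      intro u hu
      rw [image_eq_zero_of_notMem_tsupport (fun h => hu (hφ.2 h)), zero_smul]
    rw [this]
    exact norm_integral_le_integral_norm _
  have i1 : IntegrableOn (fun u => R/2 * φ u ^ 2) B := integrableOn_of_bounded hBb (by fun_prop)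
  have i2 : IntegrableOn (fun u => (2*R)⁻¹ * ‖g (Phi n a r u)‖ ^ 2) B :=
    integrableOn_of_bounded hBb (continuous_const.mul (hgc.norm.pow 2))
  have h2 : ∫ u in B, ‖φ u • g (Phi n a r u)‖ ≤
      ∫ u in B, (R/2 * φ u ^ 2 + (2*R)⁻¹ * ‖g (Phi n a r u)‖ ^ 2) := by
    apply setIntegral_mono
    · exact integrableOn_of_bounded hBb (hφc.smul hgc).norm
    · exact i1.add i2
    · intro u
      simp only [norm_smul, Real.norm_eq_abs]
      rw [← sq_abs (φ u)]
      set p := |φ u|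
      set q := ‖g (Phi n a r u)‖
      have h3 : R/2 * p^2 + (2*R)⁻¹ * q^2 - p * q = (2*R)⁻¹ * (R * p - q)^2 := by
        field_simp; ring
      have : 0 ≤ (2*R)⁻¹ * (R * p - q)^2 := by positivity
      linarith
  rw [integral_add i1 i2, integral_const_mul, integral_const_mul] at h2
  have h3 : (2*R)⁻¹ * ∫ u in B, ‖g (Phi n a r u)‖^2 ≤ R / 2 := by
    calc _ ≤ (2*R)⁻¹ * R^2 := by gcongr
      _ = R / 2 := by field_simp
  have h4 : R ≤ r^(-((n:ℝ) + 3/2)) * N := by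
    rw [hR]
    gcongr
    rw [← Real.rpow_natCast, ← Real.rpow_neg hr0.le]
    apply Real.rpow_le_rpow_of_exponent_ge hr0 hr.2
    push_cast; linarith
  have h5 : 0 ≤ ∫ u in B, φ u ^ 2 := by positivity
  calc ‖Av n φ g a r‖ ≤ R/2 * (∫ u in B, φ u ^ 2) + R/2 := by linarith
    _ = ((∫ u in B, φ u ^ 2) + 1) / 2 * R := by ring
    _ ≤ ((∫ u in B, φ u ^ 2) + 1) / 2 * (r^(-((n:ℝ) + 3/2)) * N) := by gcongr
    _ = _ := by ring

lemma mvt_aux {A A' : ℝ → E} {K e r : ℝ} (hK : 0 ≤ K) (he : e + 1 ≠ 0) (hr : r ∈ Set.Ioc (0:ℝ) 1)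
    (hA : ∀ s, HasDerivAt A (A' s) s) (hb : ∀ s ∈ Set.Ioc (0:ℝ) 1, ‖A' s‖ ≤ K * s^e) :
    ‖A 1 - A r‖ ≤ K / |e+1| * r^(min (e+1) 0) := by
  have hr0 := hr.1
  have hder : ∀ x ∈ Set.Icc r 1, HasDerivAt (fun x : ℝ => K * ((x^(e+1) - r^(e+1)) / (e+1))) (K * x^e) x := by
    intro x hx
    have hx0 : x ≠ 0 := (hr0.trans_le hx.1).ne'
    have := (((Real.hasDerivAt_rpow_const (p := e+1) (Or.inl hx0)).sub_const (r^(e+1))).div_const (e+1)).const_mul K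
    refine this.congr_deriv ?_
    field_simp
    simp
  have key := image_norm_le_of_norm_deriv_right_le_deriv_boundary' (a := r) (b := 1)
    (f := fun x => A x - A r) (f' := A')
    (B := fun x => K * ((x^(e+1) - r^(e+1)) / (e+1))) (B' := fun x => K * x^e)
    (fun x _ => ((hA x).sub_const (A r)).continuousAt.continuousWithinAt)
    (fun x _ => ((hA x).sub_const (A r)).hasDerivWithinAt) (by simp)
    (fun x hx => (hder x hx).continuousAt.continuousWithinAt)
    (fun x hx => (hder x (Set.Ico_subset_Icc_self hx)).hasDerivWithinAt)
    (fun x hx => hb x ⟨hr0.trans_le hx.1, hx.2.le⟩)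
    (Set.right_mem_Icc.2 hr.2)
  refine key.trans ?_
  rw [div_mul_eq_mul_div, mul_div_assoc]
  refine mul_le_mul_of_nonneg_left ?_ hK
  rw [Real.one_rpow]
  have hp := Real.rpow_pos_of_pos hr0 (e+1)
  rcases lt_or_gt_of_ne he with h | h
  · rw [min_eq_left h.le, abs_of_neg h, div_neg, ← neg_div]
    rw [div_le_div_right_of_neg h]; linarith
  · rw [min_eq_right h.le, abs_of_pos h, Real.rpow_zero]
    gcongr; linarith

lemma est_step {n : ℕ} (hn : 1 ≤ n) {ρ : ℝ} {l : ℕ} {e : ℝ} (he : e + 1 ≠ 0) (h : Est E n ρ l e) :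
    Est E n ρ (l+1) (min (e+1) 0) := by
  intro φ hφ
  have hq : ContDiff ℝ (⊤:ℕ∞) (fun u : Fin (2*n+1) → ℝ => 2 * u (lastI n) - yx n u u) := by
    refine ContDiff.sub (by fun_prop) (contDiff_yx n)
  have hcm : ∀ i : Fin (2*n), Tst n ρ (fun u => u i.castSucc * φ u) := fun i =>
    hφ.mul (p := fun u => u i.castSucc) (by fun_prop)
  obtain ⟨C0, hC0, H0⟩ := h φ hφ
  choose Ci hCi Hi using fun i => h _ (hcm i)
  obtain ⟨C1, hC1, H1⟩ := h _ ((hφ.mul hq).hDeriv ⟨0, by omega⟩)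
  obtain ⟨C2, hC2, H2⟩ := h _ ((hφ.mul hq).hDeriv ⟨n, by omega⟩)
  have hsum : 0 ≤ ∑ i, Ci i := Finset.sum_nonneg fun i _ => hCi i
  refine ⟨C0 + (∑ i, Ci i + (C1 + C2)) / |e+1|, by positivity, ?_⟩
  intro S hSb hSm a hmap g hg N hN hBd r hr
  have hd := fun s => hasDerivAt_Av hn hφ hg a s
  have hm := mvt_aux (K := (∑ i, Ci i + (C1 + C2)) * N) (e := e) (r := r) (by positivity) he hr hd ?_
  · have h1 := H0 S hSb hSm a hmap g hg N hN hBd.mono 1 (by simp)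
    rw [Real.one_rpow, mul_one] at h1
    have h2 : ‖Av n φ g a r‖ ≤ ‖Av n φ g a 1‖ + ‖Av n φ g a 1 - Av n φ g a r‖ := by
      have := norm_sub_le (Av n φ g a 1) (Av n φ g a 1 - Av n φ g a r)
      simpa using this
    have h3 : 1 ≤ r^(min (e+1) 0) :=
      Real.one_le_rpow_of_pos_of_le_one_of_nonpos hr.1 hr.2 (min_le_right _ _)
    have h4 : C0 * N ≤ C0 * N * r^(min (e+1) 0) := le_mul_of_one_le_right (by positivity) h3
    calc _ ≤ C0 * N * r^(min (e+1) 0) + _ := h2.trans (add_le_add (h1.trans h4) hm)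
      _ = _ := by ring
  · intro s hs
    refine (norm_add_le _ _).trans ?_
    have b1 := norm_sum_le_of_le Finset.univ (fun i (_ : i ∈ Finset.univ) =>
      Hi i S hSb hSm a hmap _ (contDiff_hDeriv i hg) N hN (hBd.hDeriv i) s hs)
    have b2 := H1 S hSb hSm a hmap _ (contDiff_hDeriv ⟨n, by omega⟩ hg) N hN (hBd.hDeriv _) s hs
    have b3 := H2 S hSb hSm a hmap _ (contDiff_hDeriv ⟨0, by omega⟩ hg) N hN (hBd.hDeriv _) s hs
    refine (add_le_add b1 ((norm_sub_le _ _).trans (add_le_add b2 b3))).trans (le_of_eq ?_)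
    simp_rw [mul_assoc, ← Finset.sum_mul]
    ring

lemma est_low {n : ℕ} (hn : 1 ≤ n) (ρ : ℝ) (l : ℕ) (hl : l ≤ n + 1) :
    Est E n ρ l ((l:ℝ) - ((n:ℝ) + 3/2)) := by
  induction l with
  | zero => simpa using est_zero (E := E) n ρ
  | succ l ih =>
    have hl' : (l:ℝ) + 1 ≤ n + 1 := by exact_mod_cast hl
    have h1 : (l:ℝ) - ((n:ℝ) + 3/2) + 1 < 0 := by linarith
    have h2 := est_step hn h1.ne (ih (by omega))
    rw [min_eq_left h1.le] at h2
    convert h2 using 1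
    push_cast; ring

lemma est_top {n : ℕ} (hn : 1 ≤ n) (ρ : ℝ) : Est E n ρ (n+2) 0 := by
  have h := est_low (E := E) hn ρ (n+1) le_rfl
  have h1 : (0:ℝ) < ((n+1:ℕ):ℝ) - ((n:ℝ) + 3/2) + 1 := by push_cast; linarith
  have h2 := est_step hn h1.ne' h
  rwa [min_eq_right h1.le] at h2

/-- Pointwise Sobolev estimate. -/
lemma sobolev_point [CompleteSpace E] {n : ℕ} (hn : 1 ≤ n) {ρ : ℝ} (hρ : 0 < ρ) :
    ∃ C : ℝ, 0 ≤ C ∧ ∀ S : Set (Fin (2*n+1) → ℝ), IsBounded S → MeasurableSet S →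
    ∀ a : Fin (2*n+1) → ℝ, (∀ r ∈ Set.Ioc (0:ℝ) 1, Set.MapsTo (Phi n a r) (Metric.ball 0 ρ) S) →
    ∀ g : (Fin (2*n+1) → ℝ) → E, ContDiff ℝ (⊤:ℕ∞) g → ∀ N : ℝ, 0 ≤ N → Bd n (n+2) S g N →
    ‖g a‖ ≤ C * N := by
  obtain ⟨φ, hφs, hφc, hφd, hφr, hφ0⟩ := exists_contDiff_tsupport_subset (n := ⊤)
    (Metric.ball_mem_nhds (0 : Fin (2*n+1) → ℝ) hρ)
  have hT : Tst n ρ φ := ⟨hφd, hφs⟩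
  have hpos : 0 < ∫ u, φ u := by
    apply Continuous.integral_pos_of_hasCompactSupport_nonneg_nonzero (x := 0) hφd.continuous hφc
    · intro x; exact (hφr ⟨x, rfl⟩).1
    · rw [hφ0]; exact one_ne_zero
  obtain ⟨C, hC, H⟩ := est_top (E := E) hn ρ φ hT
  refine ⟨C / ∫ u, φ u, by positivity, ?_⟩
  intro S hSb hSm a hmap g hg N hN hBd
  have key : ∀ M, N < M → ‖(∫ u, φ u) • g a‖ ≤ C * M := by
    intro M hM
    have hM0 : 0 < M := hN.trans_lt hM
    have hB : Bd n (n+2) S g M := fun I hI => (hBd I hI).trans (by gcongr)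
    have h1 : Filter.Tendsto (fun r => ‖Av n φ g a r‖) (nhdsWithin 0 (Set.Ioi 0))
        (nhds ‖Av n φ g a 0‖) :=
      ((hasDerivAt_Av0 hT hg a 0).continuousAt.norm.tendsto).mono_left nhdsWithin_le_nhds
    have h2 : Av n φ g a 0 = (∫ u, φ u) • g a := by
      simp only [Av, Phi_zero]
      rw [integral_smul_const]
    rw [← h2]
    refine le_of_tendsto h1 ?_
    have : Set.Ioc (0:ℝ) 1 ∈ nhdsWithin (0:ℝ) (Set.Ioi 0) := Ioc_mem_nhdsGT one_pos
    filter_upwards [this] with r hr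
    have := H S hSb hSm a hmap g hg M hM0 hB r hr
    simpa using this
  have key2 : ‖(∫ u, φ u) • g a‖ ≤ C * N := by
    have ht : Filter.Tendsto (fun M => C * M) (nhdsWithin N (Set.Ioi N)) (nhds (C * N)) :=
      ((continuous_const.mul continuous_id).tendsto N).mono_left nhdsWithin_le_nhds
    refine ge_of_tendsto ht ?_
    filter_upwards [self_mem_nhdsWithin] with M hM using key M hM
  rw [norm_smul, Real.norm_of_nonneg hpos.le] at key2
  rw [div_mul_eq_mul_div, le_div_iff₀ hpos, mul_comm]
  exact key2

end HEst


/-! ### Ordinary derivatives in terms of horizontal ones -/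

section HOps

variable {E : Type*} [NormedAddCommGroup E] [NormedSpace ℝ E]

inductive HOp (n : ℕ) : ℕ → (((Fin (2*n+1) → ℝ) → E) → ((Fin (2*n+1) → ℝ) → E)) → Prop
  | base (d : ℕ) (J : List (Fin (2*n))) (h : J.length ≤ d) : HOp n d (XI n J)
  | add (d : ℕ) (A B) : HOp n d A → HOp n d B → HOp n d (fun f x => A f x + B f x)
  | mul (d : ℕ) (p : (Fin (2*n+1) → ℝ) → ℝ) (hp : ContDiff ℝ (⊤:ℕ∞) p) (A) : HOp n d A →
      HOp n d (fun f x => p x • A f x)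

lemma HOp.smooth {n d : ℕ} {A : ((Fin (2*n+1) → ℝ) → E) → ((Fin (2*n+1) → ℝ) → E)}
    (h : HOp n d A) {f : (Fin (2*n+1) → ℝ) → E} (hf : ContDiff ℝ (⊤:ℕ∞) f) :
    ContDiff ℝ (⊤:ℕ∞) (A f) := by
  induction h with
  | base J h => exact contDiff_XI J hf
  | add A B _ _ ihA ihB => exact ihA.add ihB
  | mul p hp A _ ih => exact hp.smul ih

lemma HOp.mono {n d d' : ℕ} {A : ((Fin (2*n+1) → ℝ) → E) → ((Fin (2*n+1) → ℝ) → E)}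
    (h : HOp n d A) (hd : d ≤ d') : HOp n d' A := by
  induction h with
  | base J h => exact .base _ J (by omega)
  | add A B _ _ ihA ihB => exact .add _ _ _ ihA ihB
  | mul p hp A _ ih => exact .mul _ p hp _ ih

lemma HOp.deriv {n d : ℕ} {A : ((Fin (2*n+1) → ℝ) → E) → ((Fin (2*n+1) → ℝ) → E)}
    (h : HOp n d A) (j : Fin (2*n)) : ∃ B, HOp n (d+1) B ∧
      ∀ f : (Fin (2*n+1) → ℝ) → E, ContDiff ℝ (⊤:ℕ∞) f → hDeriv n j (A f) = B f := by
  induction h with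
  | base J h => exact ⟨XI n (j :: J), .base _ _ (by simpa using h), fun f hf => rfl⟩
  | add A B hA hB ihA ihB =>
    obtain ⟨A', hA', eA⟩ := ihA
    obtain ⟨B', hB', eB⟩ := ihB
    refine ⟨_, .add _ _ _ hA' hB', fun f hf => ?_⟩
    ext1 x
    rw [← eA f hf, ← eB f hf]
    have h1 := ((hA.smooth hf).differentiable (by simp) x).hasFDerivAt
    have h2 := ((hB.smooth hf).differentiable (by simp) x).hasFDerivAt
    have h3 : fderiv ℝ (fun x => A f x + B f x) x = _ := (h1.add h2).fderiv
    simp only [hDeriv, h3]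
    rfl
  | mul p hp A hA ih =>
    obtain ⟨A', hA', eA⟩ := ih
    refine ⟨_, .add _ _ _ (.mul _ p hp _ hA')
      (.mul _ (hDeriv n j p) (contDiff_hDeriv j hp) _ (hA.mono (Nat.le_succ _))), fun f hf => ?_⟩
    ext1 x
    rw [← eA f hf]
    have h1 := ((hA.smooth hf).differentiable (by simp) x).hasFDerivAt
    have h2 := (hp.differentiable (by simp) x).hasFDerivAt
    have h3 : fderiv ℝ (fun x => p x • A f x) x = _ := (h2.smul h1).fderiv
    simp only [hDeriv, h3]
    simp

lemma HOp.lastD {n d : ℕ} (hn : 1 ≤ n) {A : ((Fin (2*n+1) → ℝ) → E) → ((Fin (2*n+1) → ℝ) → E)}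
    (h : HOp n d A) : ∃ B, HOp n (d+2) B ∧
      ∀ f : (Fin (2*n+1) → ℝ) → E, ContDiff ℝ (⊤:ℕ∞) f → pDeriv n (lastI n) (A f) = B f := by
  obtain ⟨A0, h0, e0⟩ := h.deriv ⟨0, by omega⟩
  obtain ⟨A1, h1, e1⟩ := h.deriv ⟨n, by omega⟩
  obtain ⟨A10, h10, e10⟩ := h0.deriv ⟨n, by omega⟩
  obtain ⟨A01, h01, e01⟩ := h1.deriv ⟨0, by omega⟩
  refine ⟨_, .add _ _ _ h10 (.mul _ (fun _ => -1) contDiff_const _ h01), fun f hf => ?_⟩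
  ext1 x
  rw [hcommutator hn (h.smooth hf), e0 f hf, e1 f hf, e10 f hf, e01 f hf]
  simp [sub_eq_add_neg]

lemma HOp.pD {n d : ℕ} (hn : 1 ≤ n) {A : ((Fin (2*n+1) → ℝ) → E) → ((Fin (2*n+1) → ℝ) → E)}
    (h : HOp n d A) (i : Fin (2*n+1)) : ∃ B, HOp n (d+2) B ∧
      ∀ f : (Fin (2*n+1) → ℝ) → E, ContDiff ℝ (⊤:ℕ∞) f → pDeriv n i (A f) = B f := by
  obtain ⟨T, hT, eT'⟩ := h.lastD hn
  induction i using Fin.lastCases with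
  | last => exact ⟨T, hT, eT'⟩
  | cast j =>
    obtain ⟨B, hB, eB⟩ := h.deriv j
    refine ⟨_, .add _ _ _ (hB.mono (Nat.le_succ _))
      (.mul _ (fun x => - cX n j x) (contDiff_cX n j).neg _ hT), fun f hf => ?_⟩
    ext1 x
    rw [← eB f hf, ← eT' f hf, hDeriv_eq]
    simp

lemma HOp.pI {n : ℕ} (hn : 1 ≤ n) (I : List (Fin (2*n+1))) :
    ∃ B, HOp (E := E) n (2 * I.length) B ∧
      ∀ f : (Fin (2*n+1) → ℝ) → E, ContDiff ℝ (⊤:ℕ∞) f → pI n I f = B f := by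
  induction I with
  | nil => exact ⟨XI n [], .base _ _ (by simp), fun f _ => rfl⟩
  | cons i I ih =>
    obtain ⟨B, hB, eB⟩ := ih
    obtain ⟨B', hB', eB'⟩ := hB.pD hn i
    refine ⟨B', hB'.mono (by simp; omega), fun f hf => ?_⟩
    rw [← eB' f hf, ← eB f hf]
    rfl

lemma HOp.bound {n d : ℕ} {A : ((Fin (2*n+1) → ℝ) → E) → ((Fin (2*n+1) → ℝ) → E)}
    (h : HOp n d A) {K : Set (Fin (2*n+1) → ℝ)} (hK : IsCompact K) :
    ∃ C : ℝ, 0 ≤ C ∧ ∀ (f : (Fin (2*n+1) → ℝ) → E), ∀ x ∈ K, ∀ M : ℝ, 0 ≤ M →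
      (∀ J : List (Fin (2*n)), J.length ≤ d → ‖XI n J f x‖ ≤ M) → ‖A f x‖ ≤ C * M := by
  induction h with
  | base J h => exact ⟨1, zero_le_one, fun f x _ M _ H => by rw [one_mul]; exact H J h⟩
  | add A B _ _ ihA ihB =>
    obtain ⟨CA, h1, HA⟩ := ihA
    obtain ⟨CB, h2, HB⟩ := ihB
    refine ⟨CA + CB, by positivity, fun f x hx M hM H => ?_⟩
    rw [add_mul]
    exact (norm_add_le _ _).trans (add_le_add (HA f x hx M hM H) (HB f x hx M hM H))
  | mul p hp A _ ih =>
    obtain ⟨CA, h1, HA⟩ := ih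
    obtain ⟨P, hP⟩ := hK.exists_bound_of_continuousOn hp.continuous.continuousOn
    refine ⟨|P| * CA, by positivity, fun f x hx M hM H => ?_⟩
    rw [norm_smul, mul_assoc]
    exact mul_le_mul ((hP x hx).trans (le_abs_self P)) (HA f x hx M hM H) (norm_nonneg _) (abs_nonneg _)

lemma pI_bound {n : ℕ} (hn : 1 ≤ n) (k : ℕ) {K : Set (Fin (2*n+1) → ℝ)} (hK : IsCompact K) :
    ∃ C : ℝ, 0 ≤ C ∧ ∀ I : List (Fin (2*n+1)), I.length ≤ k →
      ∀ (f : (Fin (2*n+1) → ℝ) → E), ContDiff ℝ (⊤:ℕ∞) f → ∀ x ∈ K, ∀ M : ℝ, 0 ≤ M →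
      (∀ J : List (Fin (2*n)), J.length ≤ 2 * k → ‖XI n J f x‖ ≤ M) → ‖pI n I f x‖ ≤ C * M := by
  have h1 : ∀ I : List (Fin (2*n+1)), ∃ C : ℝ, 0 ≤ C ∧ ∀ (f : (Fin (2*n+1) → ℝ) → E),
      ContDiff ℝ (⊤:ℕ∞) f → ∀ x ∈ K, ∀ M : ℝ, 0 ≤ M →
      (∀ J : List (Fin (2*n)), J.length ≤ 2 * I.length → ‖XI n J f x‖ ≤ M) →
      ‖pI n I f x‖ ≤ C * M := by
    intro I
    obtain ⟨B, hB, eB⟩ := HOp.pI (E := E) hn I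
    obtain ⟨C, hC, H⟩ := hB.bound hK
    refine ⟨C, hC, fun f hf x hx M hM HJ => ?_⟩
    rw [eB f hf]
    exact H f x hx M hM HJ
  choose C hC H using h1
  obtain ⟨b, hb⟩ := ((List.finite_length_le (Fin (2*n+1)) k).image C).bddAbove
  refine ⟨|b|, abs_nonneg b, fun I hI f hf x hx M hM HJ => ?_⟩
  refine (H I f hf x hx M hM (fun J hJ => HJ J (by omega))).trans ?_
  gcongr
  exact (hb ⟨I, hI, rfl⟩).trans (le_abs_self b)

/-! ### Integrability of the horizontal derivatives up to the boundary -/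

def QB {F : Type*} [NormedAddCommGroup F] [NormedSpace ℝ F] {n : ℕ} (D : Set (Fin (2*n+1) → ℝ))
    (h : (Fin (2*n+1) → ℝ) → F) : Prop :=
  ContDiffOn ℝ (⊤:ℕ∞) h D ∧ ∀ m : ℕ, ∃ M, ∀ x ∈ D, ‖iteratedFDerivWithin ℝ m h D x‖ ≤ M

lemma QB_of_closure {n : ℕ} {D : Set (Fin (2*n+1) → ℝ)} (hD : IsOpen D) (hDb : IsBounded D)
    {f : (Fin (2*n+1) → ℝ) → E} (hf : ContDiffOn ℝ (⊤:ℕ∞) f (closure D)) : QB D f := by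
  refine ⟨hf.mono subset_closure, fun m => ?_⟩
  suffices h : ∃ M, ∀ x ∈ closure D ∩ D, ‖iteratedFDerivWithin ℝ m f D x‖ ≤ M by
    obtain ⟨M, hM⟩ := h
    exact ⟨M, fun x hx => hM x ⟨subset_closure hx, hx⟩⟩
  refine hDb.isCompact_closure.induction_on
    (p := fun s => ∃ M, ∀ x ∈ s ∩ D, ‖iteratedFDerivWithin ℝ m f D x‖ ≤ M) ⟨0, by simp⟩ ?_ ?_ ?_
  · rintro s t hst ⟨M, hM⟩
    exact ⟨M, fun x hx => hM x ⟨hst hx.1, hx.2⟩⟩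
  · rintro s t ⟨M, hM⟩ ⟨M', hM'⟩
    refine ⟨max M M', ?_⟩
    rintro x ⟨hx | hx, hxD⟩
    · exact (hM x ⟨hx, hxD⟩).trans (le_max_left _ _)
    · exact (hM' x ⟨hx, hxD⟩).trans (le_max_right _ _)
  · intro x hx
    have h1 : ContDiffWithinAt ℝ ((m : ℕ∞) : WithTop ℕ∞) f (closure D) x :=
      (hf x hx).of_le (WithTop.coe_le_coe.2 le_top)
    obtain ⟨u, hu, p, hp⟩ := h1 m le_rfl
    rw [Set.insert_eq_of_mem hx] at hu
    have hxu : x ∈ u := mem_of_mem_nhdsWithin hx hu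
    have hpc : ContinuousWithinAt (fun y => p y m) u x := hp.cont m le_rfl x hxu
    have hpb : ∀ᶠ y in nhdsWithin x u, ‖p y m‖ < ‖p x m‖ + 1 :=
      hpc.norm.eventually_lt_const (lt_add_one _)
    have hpb' : ∀ᶠ y in nhdsWithin x (closure D), ‖p y m‖ < ‖p x m‖ + 1 :=
      (nhdsWithin_le_of_mem hu) hpb
    obtain ⟨V, hVo, hxV, hV⟩ := mem_nhdsWithin.1 hu
    have hV' : V ∈ nhdsWithin x (closure D) := mem_nhdsWithin_of_mem_nhds (hVo.mem_nhds hxV)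
    refine ⟨_, Filter.inter_mem hpb' hV', ‖p x m‖ + 1, ?_⟩
    rintro y ⟨⟨hy, hyV⟩, hyD⟩
    have hsub : D ∩ V ⊆ u := fun z hz => hV ⟨hz.2, subset_closure hz.1⟩
    have h2 := (hp.mono hsub).eq_iteratedFDerivWithin_of_uniqueDiffOn le_rfl
      (hD.inter hVo).uniqueDiffOn (⟨hyD, hyV⟩ : y ∈ D ∩ V)
    rw [iteratedFDerivWithin_inter_open hVo hyV] at h2
    rw [← h2]
    exact le_of_lt hy

lemma QB_of_smooth {F : Type*} [NormedAddCommGroup F] [NormedSpace ℝ F] {n : ℕ}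
    {D : Set (Fin (2*n+1) → ℝ)} (hD : IsOpen D) (hDb : IsBounded D)
    {f : (Fin (2*n+1) → ℝ) → F} (hf : ContDiff ℝ (⊤:ℕ∞) f) : QB D f :=
  QB_of_closure hD hDb hf.contDiffOn

lemma QB.congr {n : ℕ} {D : Set (Fin (2*n+1) → ℝ)} {f g : (Fin (2*n+1) → ℝ) → E}
    (h : QB D f) (hfg : Set.EqOn g f D) : QB D g := by
  refine ⟨h.1.congr hfg, fun m => ?_⟩
  obtain ⟨M, hM⟩ := h.2 m
  exact ⟨M, fun x hx => by rw [iteratedFDerivWithin_congr hfg hx]; exact hM x hx⟩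

lemma QB.hDeriv {n : ℕ} {D : Set (Fin (2*n+1) → ℝ)} (hD : IsOpen D) (hDb : IsBounded D)
    {f : (Fin (2*n+1) → ℝ) → E} (h : QB D f) (j : Fin (2*n)) : QB D (hDeriv n j f) := by
  have hX := QB_of_smooth hD hDb (contDiff_Xvec n j)
  have hu := hD.uniqueDiffOn (𝕜 := ℝ)
  have hf' : ContDiffOn ℝ (⊤:ℕ∞) (fderivWithin ℝ f D) D := h.1.fderivWithin hu (by simp)
  refine QB.congr (f := fun x => fderivWithin ℝ f D x (Xvec n j x)) ?_ ?_
  · refine ⟨hf'.clm_apply hX.1, fun m => ?_⟩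
    choose M hM using h.2
    choose P hP using hX.2
    refine ⟨∑ i ∈ Finset.range (m+1), (m.choose i : ℝ) * M (i+1) * P (m - i), fun x hx => ?_⟩
    refine (norm_iteratedFDerivWithin_clm_apply hf' hX.1 hu hx
      (WithTop.coe_le_coe.2 le_top : ((m:ℕ∞) : WithTop ℕ∞) ≤ _)).trans ?_
    refine Finset.sum_le_sum fun i _ => ?_
    rw [norm_iteratedFDerivWithin_fderivWithin hu hx]
    have a1 := hM (i+1) x hx
    have a2 := hP (m-i) x hx
    have a3 : 0 ≤ M (i+1) := (norm_nonneg _).trans a1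
    gcongr
  · intro x hx
    simp only [_root_.hDeriv]
    rw [fderivWithin_of_isOpen hD hx]

lemma QB.XI {n : ℕ} {D : Set (Fin (2*n+1) → ℝ)} (hD : IsOpen D) (hDb : IsBounded D)
    {f : (Fin (2*n+1) → ℝ) → E} (h : QB D f) (I : List (Fin (2*n))) : QB D (XI n I f) := by
  induction I with
  | nil => exact h
  | cons j I ih => exact QB.hDeriv hD hDb ih j

lemma QB.integrable {n : ℕ} {D : Set (Fin (2*n+1) → ℝ)} (hD : IsOpen D) (hDb : IsBounded D)
    {f : (Fin (2*n+1) → ℝ) → E} (h : QB D f) : IntegrableOn (fun x => ‖f x‖^2) D := by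
  obtain ⟨M, hM⟩ := h.2 0
  have hm : AEStronglyMeasurable (fun x => ‖f x‖^2) (volume.restrict D) :=
    (h.1.continuousOn.norm.pow 2).aestronglyMeasurable hD.measurableSet
  have hc : IntegrableOn (fun _ : Fin (2*n+1) → ℝ => M^2) D :=
    integrableOn_const hDb.measure_lt_top.ne
  refine Integrable.mono' hc hm ?_
  · refine (ae_restrict_iff' hD.measurableSet).2 (Filter.Eventually.of_forall fun x hx => ?_)
    have := hM x hx
    rw [norm_iteratedFDerivWithin_zero] at this
    rw [norm_pow, norm_norm]
    gcongr

lemma XI_congr {n : ℕ} {U : Set (Fin (2*n+1) → ℝ)} (hU : IsOpen U)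
    {f g : (Fin (2*n+1) → ℝ) → E} (h : Set.EqOn f g U) (I : List (Fin (2*n))) :
    Set.EqOn (XI n I f) (XI n I g) U := by
  induction I with
  | nil => exact h
  | cons j I ih =>
    intro x hx
    have : XI n I f =ᶠ[nhds x] XI n I g := Filter.eventuallyEq_of_mem (hU.mem_nhds hx) ih
    simp only [XI, hDeriv, this.fderiv_eq]

lemma pI_congr {n : ℕ} {U : Set (Fin (2*n+1) → ℝ)} (hU : IsOpen U)
    {f g : (Fin (2*n+1) → ℝ) → E} (h : Set.EqOn f g U) (I : List (Fin (2*n+1))) :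
    Set.EqOn (pI n I f) (pI n I g) U := by
  induction I with
  | nil => exact h
  | cons j I ih =>
    intro x hx
    have : pI n I f =ᶠ[nhds x] pI n I g := Filter.eventuallyEq_of_mem (hU.mem_nhds hx) ih
    simp only [pI, pDeriv, this.fderiv_eq]

lemma term_le_fsNormSq {n : ℕ} (D : Set (Fin (2*n+1) → ℝ)) (s : ℕ) (f : (Fin (2*n+1) → ℝ) → E)
    (I : List (Fin (2*n))) (hI : I.length ≤ s) :
    ∫ x in D, ‖XI n I f x‖^2 ≤ fsNormSq n D s f := by
  unfold fsNormSq
  have hnn : ∀ (t : ℕ) (J : Fin t → Fin (2*n)), 0 ≤ ∫ x in D, ‖XI n (List.ofFn J) f x‖^2 :=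
    fun t J => by positivity
  have h1 : ∫ x in D, ‖XI n I f x‖^2 ≤ ∑ J : Fin I.length → Fin (2*n),
      ∫ x in D, ‖XI n (List.ofFn J) f x‖^2 := by
    have := Finset.single_le_sum (f := fun J : Fin I.length → Fin (2*n) =>
      ∫ x in D, ‖XI n (List.ofFn J) f x‖^2) (fun J _ => hnn _ J) (Finset.mem_univ I.get)
    simpa only [List.ofFn_get] using this
  refine h1.trans ?_
  exact Finset.single_le_sum (f := fun t => ∑ J : Fin t → Fin (2*n),
      ∫ x in D, ‖XI n (List.ofFn J) f x‖^2) (fun t _ => Finset.sum_nonneg fun J _ => hnn t J)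
      (Finset.mem_range.2 (by omega))

lemma exists_ext {n : ℕ} {D K : Set (Fin (2*n+1) → ℝ)} (hD : IsOpen D) (hK : IsCompact K)
    (hKD : K ⊆ D) {f : (Fin (2*n+1) → ℝ) → E} (hf : ContDiffOn ℝ (⊤:ℕ∞) f D) :
    ∃ g : (Fin (2*n+1) → ℝ) → E, ContDiff ℝ (⊤:ℕ∞) g ∧ Set.EqOn f g K := by
  obtain ⟨χ, h0, h1, -⟩ := exists_contMDiffMap_zero_one_nhds_of_isClosed (n := (⊤:ℕ∞))
    (modelWithCornersSelf ℝ (Fin (2*n+1) → ℝ)) hD.isClosed_compl hK.isClosed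
    (Set.disjoint_left.2 fun x hx hx' => hx (hKD hx'))
  have hχ : ContDiff ℝ (⊤:ℕ∞) χ := χ.contMDiff.contDiff
  refine ⟨fun x => χ x • f x, ?_, ?_⟩
  · rw [contDiff_iff_contDiffAt]
    intro x
    by_cases hx : x ∈ D
    · exact hχ.contDiffAt.smul (hf.contDiffAt (hD.mem_nhds hx))
    · have h2 : ∀ᶠ y in nhds x, χ y = 0 := h0.filter_mono (nhds_le_nhdsSet hx)
      refine (contDiffAt_const (c := (0:E))).congr_of_eventuallyEq ?_
      filter_upwards [h2] with y hy
      rw [hy, zero_smul]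
  · intro x hx
    have h2 : ∀ᶠ y in nhds x, χ y = 1 := h1.filter_mono (nhds_le_nhdsSet hx)
    simp [h2.self_of_nhds]

end HOps

theorem main_est (n m k : ℕ) (hn : 1 ≤ n)
    (D D' : Set (Fin (2*n+1) → ℝ)) (hD : IsOpen D) (hDb : IsBounded D)
    (hD'b : IsBounded D') (hsub : closure D' ⊆ D) :
    ∃ C > (0:ℝ), ∀ f : (Fin (2*n+1) → ℝ) → (Fin m → ℝ),
      ContDiffOn ℝ (⊤:ℕ∞) f (closure D) →
      ∀ I : List (Fin (2*n+1)), I.length ≤ k →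
      ∀ x ∈ closure D', ‖pI n I f x‖ ≤ C * fsNorm n D (2*k + n + 2) f := by
  have hcpt : IsCompact (closure D') := hD'b.isCompact_closure
  obtain ⟨K, hK, hD'K, hKD⟩ := exists_compact_between hcpt hD hsub
  obtain ⟨ρ, hρ, hmap⟩ : ∃ ρ : ℝ, 0 < ρ ∧ ∀ a ∈ closure D', ∀ r ∈ Set.Icc (0:ℝ) 1,
      Set.MapsTo (Phi n a r) (Metric.ball 0 ρ) (interior K) := by
    obtain ⟨u, v, hu, hv, hsu, htv, huv⟩ := generalized_tube_lemma
      (hcpt.prod (isCompact_Icc (a := (0:ℝ)) (b := 1)))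
      (isCompact_singleton (x := (0 : Fin (2*n+1) → ℝ)))
      (isOpen_interior.preimage (continuous_Phi n) : IsOpen (_ ⁻¹' interior K)) (by
        rintro ⟨⟨a, r⟩, z⟩ ⟨⟨ha, hr⟩, hz⟩
        have hz' : z = 0 := hz
        subst hz'
        simp only [Set.mem_preimage, Phi, map_zero, add_zero]
        exact hD'K ha)
    obtain ⟨ρ, hρ, hb⟩ := Metric.isOpen_iff.1 hv 0 (htv rfl)
    exact ⟨ρ, hρ, fun a ha r hr z hz => huv (⟨hsu ⟨ha, hr⟩, hb hz⟩ : ((a, r), z) ∈ u ×ˢ v)⟩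
  obtain ⟨C1, hC1, H1⟩ := sobolev_point (E := Fin m → ℝ) hn hρ
  obtain ⟨C2, hC2, H2⟩ := pI_bound (E := Fin m → ℝ) hn k hcpt
  refine ⟨C2 * C1 + 1, by positivity, fun f hf I hI x hx => ?_⟩
  obtain ⟨g, hg, hfg⟩ := exists_ext hD hK hKD (hf.mono subset_closure)
  have hfg' : Set.EqOn f g (interior K) := hfg.mono interior_subset
  have hQ := QB_of_closure hD hDb hf
  set N := fsNorm n D (2*k + n + 2) f with hN
  have hN0 : 0 ≤ N := Real.sqrt_nonneg _
  have hNsq : ∀ J : List (Fin (2*n)), J.length ≤ 2*k + n + 2 → ∫ x in D, ‖XI n J f x‖^2 ≤ N^2 := by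
    intro J hJ
    have h1 := term_le_fsNormSq D _ f J hJ
    have h0 : 0 ≤ ∫ x in D, ‖XI n J f x‖^2 := by positivity
    rw [hN, fsNorm, Real.sq_sqrt (h0.trans h1)]
    exact h1
  rw [pI_congr isOpen_interior hfg' I (hD'K hx)]
  have key := H2 I hI g hg x hx (C1 * N) (by positivity) (fun J hJ => ?_)
  · nlinarith
  · refine H1 (interior K) (hK.isBounded.subset interior_subset) isOpen_interior.measurableSet x
      (fun r hr => hmap x hx r ⟨hr.1.le, hr.2⟩) (XI n J g) (contDiff_XI J hg) N hN0 ?_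
    intro J' hJ'
    rw [← XI_append]
    have e1 : ∫ x in interior K, ‖XI n (J' ++ J) g x‖^2 = ∫ x in interior K, ‖XI n (J' ++ J) f x‖^2 := by
      refine setIntegral_congr_fun isOpen_interior.measurableSet fun y hy => ?_
      simp only [XI_congr isOpen_interior hfg' (J' ++ J) hy]
    rw [e1]
    refine le_trans ?_ (hNsq (J' ++ J) (by simp; omega))
    refine setIntegral_mono_set (QB.integrable hD hDb (QB.XI hD hDb hQ _)) ?_ ?_
    · exact Filter.Eventually.of_forall fun x => by positivity
    · exact (interior_subset.trans hKD).eventuallyLE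


/-- for `s = 2k + n + 2`, all ordinary partial derivatives of order
`≤ k` are bounded on `cl D'` by `C ‖f‖_{D,s}`; in particular the `C^k(cl D')`-norm
of `f` is bounded by a constant times `‖f‖_{D,s}`. -/
theorem statement2 (n m k : ℕ) (hn : 1 ≤ n)
    (D D' : Set (Fin (2*n+1) → ℝ)) (hD : IsOpen D) (hDb : IsBounded D)
    (hD' : IsOpen D') (hD'b : IsBounded D') (hsub : closure D' ⊆ D) :
    ∃ C > (0:ℝ), ∀ f : (Fin (2*n+1) → ℝ) → (Fin m → ℝ),
      ContDiffOn ℝ (⊤:ℕ∞) f (closure D) →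
      ∀ I : List (Fin (2*n+1)), I.length ≤ k →
      ∀ x ∈ closure D', ‖pI n I f x‖ ≤ C * fsNorm n D (2*k + n + 2) f := by
  exact main_est n m k hn D D' hD hDb hD'b hsub

end
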